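/- For τ in the upper half plane, 𝓕₁(−τ) − 𝓕₁(τ) = (πi/2)·E₁(τ), where E₁(τ) = 1 − 4∑_{m,n≥1} e^{2πimnτ}. -/

import Mathlib

open MeasureTheory Set

noncomputable def digammaC (x : ℂ) : ℂ := deriv Complex.Gamma x / Complex.Gamma x

/-- `𝓢₁(x) = ∑ (ψ(nx) - log(nx) + 1/(2nx))`. -/
noncomputable def S1 (x : ℂ) : ℂ :=
  ∑' n : ℕ, (digammaC ((n + 1) * x) - Complex.log ((n + 1) * x) + 1 / (2 * (n + 1) * x))

/-- The Ramanujan period function `𝓕₁`. -/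
noncomputable def F1 (x : ℂ) : ℂ :=
  S1 x - (1 / 2) * ((Real.eulerMascheroniConstant : ℂ) - Complex.log (2 * Real.pi / x))

/-- The weight-one Eisenstein series `E₁`. -/
noncomputable def E1 (τ : ℂ) : ℂ :=
  1 - 4 * ∑' m : ℕ, ∑' n : ℕ,
    Complex.exp (2 * Real.pi * Complex.I * (m + 1) * (n + 1) * τ)


open Filter Topology

noncomputable def gg (z : ℂ) : ℂ := digammaC z - Complex.log z + 1 / (2 * z)
noncomputable def hh (w : ℂ) : ℂ := Complex.log (1 + 1 / w) - (1 / 2) * (1 / w + 1 / (w + 1))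

lemma digammaC_eq (z : ℂ) : digammaC z = Complex.digamma z := rfl

lemma ne_neg_nat_of_re {z : ℂ} (hz : 0 ≤ z.re) (h0 : z ≠ 0) (m : ℕ) : z ≠ -m := by
  rintro rfl
  simp at hz h0
  exact h0 hz

lemma log_add_one {z : ℂ} (hz : 0 ≤ z.re) (h0 : z ≠ 0) :
    Complex.log (z + 1) = Complex.log z + Complex.log (1 + 1 / z) := by
  have hre : 0 < (1 + 1 / z).re := by
    have : 0 ≤ (1 / z).re := by
      rw [one_div, Complex.inv_re]
      exact div_nonneg hz (Complex.normSq_nonneg z)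
    simp only [Complex.add_re, Complex.one_re]
    linarith
  have h1 : (1 + 1 / z) ≠ 0 := by
    intro h; rw [h] at hre; simp at hre
  rw [← (Complex.log_mul_eq_add_log_iff h0 h1).2]
  · congr 1; field_simp
  · have a1 := abs_le.1 (Complex.abs_arg_le_pi_div_two_iff.2 hz)
    have a2 := abs_lt.1 (Complex.abs_arg_lt_pi_div_two_iff.2 (Or.inl hre))
    constructor <;> linarith [a1.1, a1.2, a2.1, a2.2]

lemma gg_rec {z : ℂ} (hz : 0 ≤ z.re) (h0 : z ≠ 0) : gg z = hh z + gg (z + 1) := by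
  have h1 : z + 1 ≠ 0 := by
    intro h
    have := congrArg Complex.re h
    simp at this; linarith
  unfold gg hh
  rw [digammaC_eq, digammaC_eq, Complex.digamma_apply_add_one z (ne_neg_nat_of_re hz h0),
    log_add_one hz h0]
  field_simp
  ring

lemma hh_bound {w : ℂ} (hw : 2 ≤ ‖w‖) : ‖hh w‖ ≤ 2 / ‖w‖ ^ 3 := by
  have h0 : w ≠ 0 := by rintro rfl; simp at hw; linarith
  set u := 1 / w with hu
  have hun : ‖u‖ ≤ 1 / 2 := by
    rw [hu, norm_div, norm_one]
    exact one_div_le_one_div_of_le (by norm_num) hw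
  have hun3 : 2 / ‖w‖ ^ 3 = 2 * ‖u‖ ^ 3 := by
    rw [hu, norm_div, norm_one]; field_simp
  have h1 : 1 / 2 ≤ ‖1 + u‖ := by
    have := norm_sub_norm_le (1 : ℂ) (-u)
    simp at this; linarith
  have h1' : 1 + u ≠ 0 := by
    intro h; rw [h] at h1; simp at h1; linarith
  have hw1 : 1 / (w + 1) = u / (1 + u) := by
    have : w + 1 ≠ 0 := by
      intro h; apply h1'; rw [hu]; field_simp; simpa using h
    have h2 : 1 + 1 / w ≠ 0 := h1'
    rw [hu]; field_simp
  have key : hh w = (Complex.log (1 + u) - Complex.logTaylor (2 + 1) u) - u ^ 3 / (2 * (1 + u)) := by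
    unfold hh
    rw [hw1, ← hu]
    simp [Complex.logTaylor, Finset.sum_range_succ]
    field_simp
    ring
  rw [key, hun3]
  refine (norm_sub_le _ _).trans ?_
  have b1 := Complex.norm_log_sub_logTaylor_le 2 (z := u) (by linarith)
  have b2 : ‖u ^ 3 / (2 * (1 + u))‖ ≤ ‖u‖ ^ 3 := by
    rw [norm_div, norm_pow, norm_mul]
    apply div_le_self (by positivity)
    simp; linarith
  have b3 : (1 - ‖u‖)⁻¹ ≤ 2 := by
    rw [inv_le_comm₀ (by linarith) (by norm_num)]; linarith
  have b4 : ‖u‖ ^ (2 + 1) * (1 - ‖u‖)⁻¹ / ((2 : ℕ) + 1) ≤ ‖u‖ ^ 3 := by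
    rw [div_le_iff₀ (by positivity)]
    have : 0 ≤ ‖u‖ ^ 3 := by positivity
    push_cast
    nlinarith
  linarith

lemma digamma_real {x : ℝ} (hx : 1 < x) :
    ‖digammaC x - Complex.log x‖ ≤ Real.log x - Real.log (x - 1) := by
  have hx0 : 0 < x := by linarith
  have hd : HasDerivAt Real.Gamma (deriv Real.Gamma x) x :=
    (Real.differentiableAt_Gamma (fun m => by
      have : (0 : ℝ) ≤ m := m.cast_nonneg
      linarith)).hasDerivAt
  have hdc : HasDerivAt Complex.Gamma (deriv Complex.Gamma x) (x : ℂ) :=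
    (Complex.differentiableAt_Gamma _ (ne_neg_nat_of_re (by simpa using hx0.le)
      (by exact_mod_cast hx0.ne'))).hasDerivAt
  have e : deriv Complex.Gamma x = (deriv Real.Gamma x : ℝ) := by
    have h1 := hdc.comp_ofReal
    have h2 := hd.ofReal_comp
    simp only [Complex.Gamma_ofReal] at h1
    exact h1.unique h2
  have e2 : digammaC x = ((deriv Real.Gamma x / Real.Gamma x : ℝ) : ℂ) := by
    rw [digammaC, e, Complex.Gamma_ofReal]; push_cast; rfl
  have hl : HasDerivAt (Real.log ∘ Real.Gamma) (deriv Real.Gamma x / Real.Gamma x) x :=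
    hd.log (Real.Gamma_pos_of_pos hx0).ne'
  have c := Real.convexOn_log_Gamma
  have c1 := c.le_slope_of_hasDerivAt (y := x + 1) (by simpa using hx0)
    (by simp; linarith) (by linarith) hl
  have c2 := c.slope_le_of_hasDerivAt (x := x - 1) (by simpa using hx)
    (by simpa using hx0) (by linarith) hl
  have g1 : Real.log (Real.Gamma (x + 1)) = Real.log x + Real.log (Real.Gamma x) := by
    rw [Real.Gamma_add_one hx0.ne', Real.log_mul hx0.ne' (Real.Gamma_pos_of_pos hx0).ne']
  have g2 : Real.log (Real.Gamma x) = Real.log (x - 1) + Real.log (Real.Gamma (x - 1)) := by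
    have := Real.Gamma_add_one (s := x - 1) (by linarith)
    rw [sub_add_cancel] at this
    rw [this, Real.log_mul (by linarith) (Real.Gamma_pos_of_pos (by linarith)).ne']
  simp only [slope_def_field, Function.comp] at c1 c2
  rw [g1] at c1
  rw [g2] at c2
  have c1' : deriv Real.Gamma x / Real.Gamma x ≤ Real.log x := by
    convert c1 using 1; ring
  have c2' : Real.log (x - 1) ≤ deriv Real.Gamma x / Real.Gamma x := by
    convert c2 using 1; ring
  rw [e2, ← Complex.ofReal_log hx0.le, ← Complex.ofReal_sub, Complex.norm_real, Real.norm_eq_abs,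
    abs_le]
  constructor <;> linarith

lemma gg_real_tendsto {x : ℝ} (hx : 2 < x) :
    Tendsto (fun N : ℕ => gg ((x : ℂ) + N)) atTop (𝓝 0) := by
  have hb : ∀ N : ℕ, ‖gg ((x : ℂ) + N)‖ ≤ 2 / ((N : ℝ) + 1) := by
    intro N
    have hN : (0 : ℝ) ≤ N := N.cast_nonneg
    have h := digamma_real (x := x + N) (by linarith)
    have hlog : Real.log (x + N) - Real.log (x + N - 1) ≤ 1 / (N + 1) := by
      rw [← Real.log_div (by linarith) (by linarith)]
      refine (Real.log_le_sub_one_of_pos (div_pos (by linarith) (by linarith))).trans ?_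
      rw [div_sub_one (by linarith)]
      rw [div_le_div_iff₀ (by linarith) (by linarith)]
      linarith
    have h3 : ‖1 / (2 * ((x : ℂ) + N))‖ ≤ 1 / (N + 1) := by
      have : (1 / (2 * ((x : ℂ) + N))) = ((1 / (2 * (x + N)) : ℝ) : ℂ) := by push_cast; rfl
      rw [this, Complex.norm_real, Real.norm_eq_abs, abs_of_pos (by positivity)]
      apply one_div_le_one_div_of_le <;> linarith
    unfold gg
    push_cast at h
    refine (norm_add_le _ _).trans ?_
    have : 2 / ((N : ℝ) + 1) = 1 / (N + 1) + 1 / (N + 1) := by ring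
    linarith
  refine squeeze_zero_norm hb ?_
  have := (tendsto_one_div_add_atTop_nhds_zero_nat (𝕜 := ℝ)).const_mul 2
  simpa [div_eq_mul_inv] using this

lemma norm_add_nat {z : ℂ} (hz : 0 ≤ z.re) (k : ℕ) : ‖z‖ ≤ ‖z + k‖ ∧ (k : ℝ) ≤ ‖z + k‖ ∧
    ‖z‖ ^ 2 + (k : ℝ) ^ 2 ≤ ‖z + k‖ ^ 2 := by
  have hk : (0 : ℝ) ≤ k := k.cast_nonneg
  have h : ‖z‖ ^ 2 + (k : ℝ) ^ 2 ≤ ‖z + k‖ ^ 2 := by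
    rw [← Complex.normSq_eq_norm_sq, ← Complex.normSq_eq_norm_sq, Complex.normSq_apply,
      Complex.normSq_apply]
    simp
    nlinarith
  refine ⟨?_, ?_, h⟩
  · apply le_of_sq_le_sq _ (norm_nonneg _); nlinarith
  · apply le_of_sq_le_sq _ (norm_nonneg _); nlinarith [norm_nonneg z]

/-- basic bound -/
lemma hh_bound2 {z : ℂ} (hz : 0 ≤ z.re) (h2 : 2 ≤ ‖z‖) (k : ℕ) :
    ‖hh (z + k)‖ ≤ 8 * ‖z‖ ^ (-(3 / 2) : ℝ) * ((k : ℝ) + 1) ^ (-(3 / 2) : ℝ) := by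
  have hk : (0 : ℝ) ≤ k := k.cast_nonneg
  obtain ⟨n1, n2, n3⟩ := norm_add_nat hz k
  refine (hh_bound (h2.trans n1)).trans ?_
  have hp : 0 < ‖z + k‖ := by linarith
  have h4 : ‖z‖ * (k + 1) / 2 ≤ ‖z + k‖ ^ 2 := by
    nlinarith [sq_nonneg (‖z‖ - (k + 1)), sq_nonneg ((k : ℝ) - 1)]
  have h5 : (‖z‖ * (k + 1) / 2) ^ (3 / 2 : ℝ) ≤ ‖z + k‖ ^ 3 := by
    calc _ ≤ (‖z + k‖ ^ 2) ^ (3 / 2 : ℝ) := by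
          apply Real.rpow_le_rpow (by positivity) h4 (by norm_num)
      _ = _ := by
          rw [← Real.rpow_natCast, ← Real.rpow_mul hp.le, ← Real.rpow_natCast]; norm_num
  have hzp : 0 < ‖z‖ := by linarith
  rw [Real.rpow_neg hzp.le, Real.rpow_neg (by positivity)]
  rw [Real.div_rpow (by positivity) (by norm_num), Real.mul_rpow hzp.le (by positivity)] at h5
  have h6 : (2 : ℝ) ^ (3 / 2 : ℝ) ≤ 4 := by
    calc (2 : ℝ) ^ (3 / 2 : ℝ) ≤ 2 ^ (2 : ℝ) :=
          Real.rpow_le_rpow_of_exponent_le (by norm_num) (by norm_num)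
      _ = 4 := by norm_num
  have hA : 0 < ‖z‖ ^ (3 / 2 : ℝ) := Real.rpow_pos_of_pos hzp _
  have hB : 0 < ((k : ℝ) + 1) ^ (3 / 2 : ℝ) := Real.rpow_pos_of_pos (by positivity) _
  have hC : 0 < (2 : ℝ) ^ (3 / 2 : ℝ) := by positivity
  calc 2 / ‖z + k‖ ^ 3 ≤ 2 / (‖z‖ ^ (3 / 2 : ℝ) * ((k : ℝ) + 1) ^ (3 / 2 : ℝ) / 2 ^ (3 / 2 : ℝ)) := by
        gcongr
    _ = 2 * 2 ^ (3 / 2 : ℝ) * (‖z‖ ^ (3 / 2 : ℝ))⁻¹ * (((k : ℝ) + 1) ^ (3 / 2 : ℝ))⁻¹ := by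
        field_simp
    _ ≤ _ := by gcongr; linarith

lemma summable_k : Summable (fun k : ℕ => ((k : ℝ) + 1) ^ (-(3 / 2) : ℝ)) := by
  have := (summable_nat_add_iff 1).2 (Real.summable_nat_rpow (p := -(3 / 2)).2 (by norm_num))
  simpa using this

lemma summable_hh {z : ℂ} (hz : 0 ≤ z.re) (h2 : 2 ≤ ‖z‖) : Summable (fun k : ℕ => hh (z + k)) :=
  Summable.of_norm_bounded (summable_k.mul_left _) (hh_bound2 hz h2)

lemma gg_sum {z : ℂ} (hz : 0 ≤ z.re) (h2 : 2 ≤ ‖z‖) (N : ℕ) :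
    gg z = ∑ k ∈ Finset.range N, hh (z + k) + gg (z + N) := by
  induction N with
  | zero => simp
  | succ N ih =>
    rw [ih, Finset.sum_range_succ, gg_rec (z := z + N)]
    · push_cast; ring_nf
    · simp; positivity
    · have := (norm_add_nat hz N).1
      intro h; rw [h] at this; simp at this; rw [this] at h2; simp at h2; linarith

lemma gg_eq_real {x : ℝ} (hx : 2 < x) : gg x = ∑' k : ℕ, hh ((x : ℂ) + k) := by
  have hre : 0 ≤ (x : ℂ).re := by simp; linarith
  have hn : 2 ≤ ‖(x : ℂ)‖ := by
    rw [Complex.norm_real, Real.norm_eq_abs, abs_of_pos (by linarith)]; linarith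
  have t1 := (summable_hh hre hn).hasSum.tendsto_sum_nat
  have t2 := t1.add (gg_real_tendsto hx)
  simp only [← gg_sum hre hn, add_zero] at t2
  exact tendsto_nhds_unique tendsto_const_nhds t2

lemma gg_eq_half : EqOn gg (fun z => ∑' k : ℕ, hh (z + k)) {z : ℂ | 2 < z.re} := by
  have hopen : IsOpen {z : ℂ | 2 < z.re} := isOpen_lt continuous_const Complex.continuous_re
  have hU : IsPreconnected {z : ℂ | 2 < z.re} := (convex_halfSpace_re_gt 2).isPreconnected
  have hG : DifferentiableOn ℂ (fun z => ∑' k : ℕ, hh (z + k)) {z : ℂ | 2 < z.re} := by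
    refine Complex.differentiableOn_tsum_of_summable_norm
      (u := fun k : ℕ => 8 * 1 * ((k : ℝ) + 1) ^ (-(3 / 2) : ℝ)) (summable_k.mul_left _) ?_ hopen ?_
    · intro k z hz
      have hz : 2 < z.re := hz
      have hre : 0 < (z + k).re := by simp; positivity
      have h0 : z + k ≠ 0 := by intro h; rw [h] at hre; simp at hre
      have h1 : z + k + 1 ≠ 0 := by
        intro h
        have := congrArg Complex.re h
        simp at this hre; linarith
      have hs : 1 + 1 / (z + k) ∈ Complex.slitPlane := by
        left
        have : 0 ≤ (1 / (z + k)).re := by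
          rw [one_div, Complex.inv_re]
          exact div_nonneg hre.le (Complex.normSq_nonneg _)
        rw [Complex.add_re, Complex.one_re]
        linarith
      apply DifferentiableAt.differentiableWithinAt
      unfold hh
      fun_prop (disch := assumption)
    · intro k z hz
      have hz : 2 < z.re := hz
      have hn : 2 ≤ ‖z‖ := hz.le.trans (Complex.re_le_norm z)
      refine (hh_bound2 (by linarith) hn k).trans ?_
      gcongr
      exact Real.rpow_le_one_of_one_le_of_nonpos (by linarith) (by norm_num)
  have hg : DifferentiableOn ℂ gg {z : ℂ | 2 < z.re} := by
    intro z hz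
    have hz : 2 < z.re := hz
    have h0 : z ≠ 0 := by rintro rfl; simp at hz; linarith
    have hnn := ne_neg_nat_of_re (z := z) (by linarith) h0
    have hs : z ∈ Complex.slitPlane := by left; linarith
    have hd : DifferentiableOn ℂ Complex.Gamma {z : ℂ | 2 < z.re} := by
      intro w hw
      have hw : 2 < w.re := hw
      exact (Complex.differentiableAt_Gamma w (ne_neg_nat_of_re (by linarith)
        (by rintro rfl; simp at hw; linarith))).differentiableWithinAt
    have hd1 : DifferentiableAt ℂ (deriv Complex.Gamma) z :=
      (hd.deriv hopen).differentiableAt (hopen.mem_nhds hz)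
    have hd2 : DifferentiableAt ℂ Complex.Gamma z := Complex.differentiableAt_Gamma z hnn
    have hg0 : Complex.Gamma z ≠ 0 := Complex.Gamma_ne_zero hnn
    have h2z : 2 * z ≠ 0 := mul_ne_zero two_ne_zero h0
    apply DifferentiableAt.differentiableWithinAt
    unfold gg digammaC
    fun_prop (disch := assumption)
  refine (hg.analyticOnNhd hopen).eqOn_of_preconnected_of_frequently_eq (hG.analyticOnNhd hopen) hU
    (z₀ := ((3 : ℝ) : ℂ)) (by simp; norm_num) ?_
  have ht : Tendsto (fun x : ℝ => (x : ℂ)) (𝓝[>] 3) (𝓝[≠] ((3 : ℝ) : ℂ)) := by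
    apply tendsto_nhdsWithin_of_tendsto_nhds_of_eventually_within
    · exact (Complex.continuous_ofReal.tendsto 3).mono_left nhdsWithin_le_nhds
    · filter_upwards [self_mem_nhdsWithin] with x hx
      have hx : 3 < x := hx
      simp only [mem_compl_iff, mem_singleton_iff, Complex.ofReal_inj]
      linarith
  apply ht.frequently
  apply Eventually.frequently
  filter_upwards [self_mem_nhdsWithin] with x hx
  have hx : 3 < x := hx
  exact gg_eq_real (by linarith)

lemma gg_eq {z : ℂ} (hz : 0 ≤ z.re) (h2 : 2 ≤ ‖z‖) : gg z = ∑' k : ℕ, hh (z + k) := by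
  rw [← (summable_hh hz h2).sum_add_tsum_nat_add 3, gg_sum hz h2 3,
    gg_eq_half (x := z + (3 : ℕ)) (by simp; linarith)]
  congr 1
  apply tsum_congr
  intro k
  push_cast; ring_nf

lemma gg_bound {z : ℂ} (hz : 0 ≤ z.re) (h2 : 2 ≤ ‖z‖) :
    ‖gg z‖ ≤ ‖z‖ ^ (-(3 / 2) : ℝ) * (8 * ∑' k : ℕ, ((k : ℝ) + 1) ^ (-(3 / 2) : ℝ)) := by
  rw [gg_eq hz h2]
  refine (tsum_of_norm_bounded (summable_k.mul_left _).hasSum (hh_bound2 hz h2)).trans ?_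
  rw [tsum_mul_left]
  apply le_of_eq; ring

lemma summable_gg {z : ℂ} (hz : 0 ≤ z.re) (h0 : z ≠ 0) :
    Summable (fun n : ℕ => gg ((n + 1) * z)) := by
  have hp : 0 < ‖z‖ := norm_pos_iff.2 h0
  obtain ⟨M, hM⟩ := exists_nat_gt (2 / ‖z‖)
  rw [div_lt_iff₀ hp] at hM
  rw [← summable_nat_add_iff M]
  refine Summable.of_norm_bounded (g := fun n : ℕ => (((n + M : ℕ) : ℝ) + 1) ^ (-(3 / 2) : ℝ) *
    (‖z‖ ^ (-(3 / 2) : ℝ) * (8 * ∑' k : ℕ, ((k : ℝ) + 1) ^ (-(3 / 2) : ℝ)))) ?_ ?_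
  · exact ((summable_nat_add_iff M).2 summable_k).mul_right _
  · intro n
    have e : (((n + M : ℕ) : ℂ) + 1) = (((((n + M : ℕ) : ℝ) + 1) : ℝ) : ℂ) := by push_cast; rfl
    have hn : ‖(((n + M : ℕ) : ℂ) + 1) * z‖ = (((n + M : ℕ) : ℝ) + 1) * ‖z‖ := by
      rw [norm_mul, e, Complex.norm_real, Real.norm_eq_abs, abs_of_pos (by positivity)]
    have hb := gg_bound (z := (((n + M : ℕ) : ℂ) + 1) * z) ?_ ?_
    · rw [hn, Real.mul_rpow (by positivity) (by positivity)] at hb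
      linarith
    · rw [e, Complex.re_ofReal_mul]; positivity
    · rw [hn]
      have : (0 : ℝ) ≤ n := n.cast_nonneg
      push_cast
      nlinarith

/-- reflection -/
lemma digamma_reflect {z : ℂ} (hz : z.im ≠ 0) :
    digammaC (-z) - digammaC z = Real.pi * Complex.cot (Real.pi * z) + 1 / z := by
  have ne : ∀ w : ℂ, w.im ≠ 0 → ∀ m : ℕ, w ≠ -m := by
    rintro w hw m rfl; simp at hw
  have h0 : z ≠ 0 := by rintro rfl; simp at hz
  have him1 : (1 - z).im ≠ 0 := by simpa using hz
  have r := Complex.digamma_apply_add_one (-z) (ne _ (by simpa using hz))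
  have hs : Complex.sin (Real.pi * z) ≠ 0 := by
    intro h
    rw [Complex.sin_eq_zero_iff] at h
    obtain ⟨k, hk⟩ := h
    have hpi : (Real.pi : ℂ) ≠ 0 := by exact_mod_cast Real.pi_ne_zero
    have : z = k := by
      apply mul_left_cancel₀ hpi; rw [hk]; ring
    rw [this] at hz; simp at hz
  have dG := (Complex.differentiableAt_Gamma z (ne z hz)).hasDerivAt
  have dG1 := (Complex.differentiableAt_Gamma (1 - z) (ne _ him1)).hasDerivAt
  have g0 := Complex.Gamma_ne_zero (ne z hz)
  have g1 := Complex.Gamma_ne_zero (ne _ him1)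
  have d2 : HasDerivAt (fun w => Complex.Gamma (1 - w)) (deriv Complex.Gamma (1 - z) * (-1)) z :=
    dG1.comp z ((hasDerivAt_id z).const_sub 1)
  have d3 := dG.mul d2
  have d4 : HasDerivAt (fun w : ℂ => Complex.sin (Real.pi * w))
      (Complex.cos (Real.pi * z) * (Real.pi * 1)) z :=
    ((hasDerivAt_id z).const_mul (Real.pi : ℂ)).csin
  have d5 := (hasDerivAt_const z (Real.pi : ℂ)).div d4 hs
  have hfun : (Complex.Gamma * fun w => Complex.Gamma (1 - w)) =
      ((fun _ => (Real.pi : ℂ)) / fun w : ℂ => Complex.sin (Real.pi * w)) := by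
    funext w; exact Complex.Gamma_mul_Gamma_one_sub w
  rw [hfun] at d3
  have eq := d3.unique d5
  have pr := Complex.Gamma_mul_Gamma_one_sub z
  have r' : digammaC (-z) = digammaC (1 - z) + 1 / z := by
    rw [digammaC_eq, digammaC_eq, show 1 - z = -z + 1 by ring, r]
    field_simp; ring
  rw [r', digammaC, digammaC, Complex.cot]
  have key : deriv Complex.Gamma (1 - z) / Complex.Gamma (1 - z)
      - deriv Complex.Gamma z / Complex.Gamma z =
      -(deriv Complex.Gamma z * Complex.Gamma (1 - z) +
        Complex.Gamma z * (deriv Complex.Gamma (1 - z) * -1)) /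
        (Complex.Gamma z * Complex.Gamma (1 - z)) := by
    field_simp; ring
  have hpi : (Real.pi : ℂ) ≠ 0 := by exact_mod_cast Real.pi_ne_zero
  rw [eq, pr] at key
  rw [add_sub_right_comm, key]
  field_simp
  ring

lemma log_neg_upper {z : ℂ} (hz : 0 < z.im) :
    Complex.log (-z) = Complex.log z - Real.pi * Complex.I := by
  rw [Complex.log, Complex.log, Complex.arg_neg_eq_arg_sub_pi_of_im_pos hz, norm_neg]
  push_cast; ring

/-- difference of terms -/
lemma gg_diff {z : ℂ} (hz : 0 < z.im) :
    gg (-z) - gg z = -2 * Real.pi * Complex.I *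
      ∑' n : ℕ, Complex.exp (2 * Real.pi * Complex.I * z) ^ (n + 1) := by
  have h0 : z ≠ 0 := by rintro rfl; simp at hz
  have hr := digamma_reflect hz.ne'
  have hc := pi_mul_cot_pi_q_exp ⟨z, hz⟩
  simp only at hc
  have hq : ‖Complex.exp (2 * Real.pi * Complex.I * z)‖ < 1 := by
    rw [Complex.norm_exp]
    simp
    positivity
  rw [(summable_geometric_of_norm_lt_one hq).tsum_eq_zero_add] at hc
  unfold gg
  rw [log_neg_upper hz]
  have : digammaC (-z) = digammaC z + (Real.pi * Complex.cot (Real.pi * z) + 1 / z) := by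
    rw [← hr]; ring
  rw [this]
  change Real.pi * Complex.cot (Real.pi * z) = _ at hc
  rw [hc]
  field_simp
  ring

lemma summable_diff {τ : ℂ} (hτ : 0 < τ.im) :
    Summable (fun n : ℕ => gg ((n + 1) * -τ) - gg ((n + 1) * τ)) := by
  set q := Complex.exp (2 * Real.pi * Complex.I * τ) with hq
  have hq1 : ‖q‖ < 1 := by
    rw [hq, Complex.norm_exp]
    simp
    positivity
  have hq0 : 0 ≤ ‖q‖ := norm_nonneg _
  have hterm : ∀ n : ℕ, gg ((n + 1) * -τ) - gg ((n + 1) * τ) =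
      -2 * Real.pi * Complex.I * ∑' m : ℕ, (q ^ (n + 1)) ^ (m + 1) := by
    intro n
    have him : 0 < (((n : ℂ) + 1) * τ).im := by
      simp; positivity
    rw [mul_neg, gg_diff him, hq, ← Complex.exp_nat_mul]
    push_cast
    ring_nf
  simp_rw [hterm]
  apply Summable.mul_left
  refine Summable.of_norm_bounded (g := fun n : ℕ => ‖q‖ ^ n * (1 - ‖q‖)⁻¹)
    ((summable_geometric_of_lt_one hq0 hq1).mul_right _) ?_
  intro n
  refine tsum_of_norm_bounded ((hasSum_geometric_of_lt_one hq0 hq1).mul_left _) ?_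
  intro m
  rw [norm_pow, norm_pow, ← pow_mul, ← pow_add]
  apply pow_le_pow_of_le_one hq0 hq1.le
  nlinarith

lemma S1_eq (x : ℂ) : S1 x = ∑' n : ℕ, gg ((n + 1) * x) := by
  unfold S1 gg
  apply tsum_congr
  intro n
  rw [mul_assoc]

theorem F1_Eisenstein (τ : ℂ) (hτ : 0 < τ.im) :
    F1 (-τ) - F1 τ = (Real.pi * Complex.I / 2) * E1 τ := by
  have h0 : τ ≠ 0 := by rintro rfl; simp at hτ
  have hd := summable_diff hτ
  have hs : Summable (fun n : ℕ => gg ((n + 1) * τ)) ∧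
      Summable (fun n : ℕ => gg ((n + 1) * -τ)) := by
    rcases le_total 0 τ.re with h | h
    · have h1 := summable_gg h h0
      exact ⟨h1, by simpa using hd.add h1⟩
    · have h1 := summable_gg (z := -τ) (by simpa using h) (neg_ne_zero.2 h0)
      exact ⟨by simpa using h1.sub hd, h1⟩
  have hS : S1 (-τ) - S1 τ = -2 * Real.pi * Complex.I * ∑' m : ℕ, ∑' n : ℕ,
      Complex.exp (2 * Real.pi * Complex.I * (m + 1) * (n + 1) * τ) := by
    rw [S1_eq, S1_eq, ← hs.2.tsum_sub hs.1, ← tsum_mul_left]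
    apply tsum_congr
    intro n
    have him : 0 < (((n : ℂ) + 1) * τ).im := by
      simp; positivity
    rw [mul_neg, gg_diff him]
    congr 1
    apply tsum_congr
    intro m
    rw [← Complex.exp_nat_mul]
    push_cast
    ring_nf
  have hl : Complex.log (2 * Real.pi / -τ) = Complex.log (2 * Real.pi / τ) + Real.pi * Complex.I := by
    have him : 0 < (-(2 * Real.pi / τ : ℂ)).im := by
      have : (2 * Real.pi / τ : ℂ) = ((2 * Real.pi : ℝ) : ℂ) * τ⁻¹ := by push_cast; rfl
      rw [Complex.neg_im, this, Complex.im_ofReal_mul, Complex.inv_im]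
      have := Complex.normSq_pos.2 h0
      rw [neg_div, mul_neg, neg_neg]
      positivity
    have := log_neg_upper him
    rw [neg_neg] at this
    rw [this, div_neg]; ring
  unfold F1 E1
  rw [hl]
  linear_combination hS
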